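/- arXiv:0812.3529 — 2 statements merged into one kernel-verified Lean document; each statement's English description precedes it below -/
import Mathlib

section
/- Fix ε > 0 and n ≥ 1. Let L : ℝ^n × ℝ^n × ℝ → ℝ be continuously differentiable and let x₊, x₋ : ℝ → ℝ^n be continuous. Set y(t) = x₊(t) + x₋(t), v(t) = d⁺_ε x₊(t) + d⁻_ε x₋(t), G(t) = ∂₁L(y(t), v(t), t) and F(t) = ∂₂L(y(t), v(t), t). Then the following are equivalent: (i) for all h₊, h₋ ∈ C_c^∞(ℝ, ℝ^n), ∫_ℝ [G(t)·(h₊(t)+h₋(t)) + F(t)·(d⁺_ε h₊(t)+d⁻_ε h₋(t))] dt = 0; (ii) for every t ∈ ℝ, G(t) = d⁻_ε F(t) and G(t) = d⁺_ε F(t). (This is the general variational theorem: a pair of trajectories is an extremal of the asymmetrically embedded action over all variation pairs if and only if both generalized Euler–Lagrange equations hold.) -/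
open MeasureTheory
open scoped RealInnerProductSpace

noncomputable section

/-- Backward (left) finite difference: `d⁺_ε f t = (f t − f (t − ε)) / ε`. -/
def backwardDiff {n : ℕ} (ε : ℝ) (f : ℝ → EuclideanSpace ℝ (Fin n)) (t : ℝ) :
    EuclideanSpace ℝ (Fin n) :=
  ε⁻¹ • (f t - f (t - ε))

/-- Forward (right) finite difference: `d⁻_ε f t = (f (t + ε) − f t) / ε`. -/
def forwardDiff {n : ℕ} (ε : ℝ) (f : ℝ → EuclideanSpace ℝ (Fin n)) (t : ℝ) :
    EuclideanSpace ℝ (Fin n) :=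
  ε⁻¹ • (f (t + ε) - f t)

/-- `∂₁L(x,v,t)`: gradient of `L` with respect to its first `ℝ^n` argument. -/
def grad1 {n : ℕ} (L : EuclideanSpace ℝ (Fin n) × EuclideanSpace ℝ (Fin n) × ℝ → ℝ)
    (x v : EuclideanSpace ℝ (Fin n)) (t : ℝ) : EuclideanSpace ℝ (Fin n) :=
  gradient (fun y => L (y, v, t)) x

/-- `∂₂L(x,v,t)`: gradient of `L` with respect to its second `ℝ^n` argument. -/
def grad2 {n : ℕ} (L : EuclideanSpace ℝ (Fin n) × EuclideanSpace ℝ (Fin n) × ℝ → ℝ)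
    (x v : EuclideanSpace ℝ (Fin n)) (t : ℝ) : EuclideanSpace ℝ (Fin n) :=
  gradient (fun w => L (x, w, t)) v

/-!
The identity `⟪F t, h t - h (t - ε)⟫ + ⟪F (t + ε) - F t, h t⟫ = P t - P (t - ε)` with
`P t = ⟪F (t + ε), h t⟫` is a discrete Leibniz rule. Its right-hand side integrates to zero by
translation invariance, so the backward difference acting on a variation is minus the adjoint of the
forward difference acting on `F`. Replacing `ε` by `-ε` exchanges the two differences, so both
Euler–Lagrange equations come from this one identity, applied to the two independent variations, and
the fundamental lemma of the calculus of variations.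
-/

open scoped ContDiff Gradient

section DifferenceQuotient

variable {E : Type*} [NormedAddCommGroup E]

theorem continuous_slope_add [NormedSpace ℝ E] {f : ℝ → E} (hf : Continuous f) (ε : ℝ) :
    Continuous fun t => slope f t (t + ε) := by
  simp only [slope_def_module, add_sub_cancel_left]
  fun_prop

theorem integrable_slope_sub [NormedSpace ℝ E] {f : ℝ → E} (hf : Integrable f) (ε : ℝ) :
    Integrable fun t => slope f (t - ε) t := by
  simp only [slope_def_module, sub_sub_cancel]
  exact (hf.sub (hf.comp_sub_right ε)).smul ε⁻¹

theorem integral_slope_sub_eq_zero [NormedSpace ℝ E] {f : ℝ → E} (hf : Integrable f) (ε : ℝ) :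
    ∫ t, slope f (t - ε) t = 0 := by
  simp only [slope_def_module, sub_sub_cancel]
  rw [integral_smul, integral_sub hf (hf.comp_sub_right ε), integral_sub_right_eq_self f ε,
    sub_self, smul_zero]

theorem inner_slope_sub_add_inner_slope_add [InnerProductSpace ℝ E] (F h : ℝ → E) (ε t : ℝ) :
    ⟪F t, slope h (t - ε) t⟫ + ⟪slope F t (t + ε), h t⟫ =
      slope (fun s => ⟪F (s + ε), h s⟫) (t - ε) t := by
  simp only [slope_def_module, sub_sub_cancel, add_sub_cancel_left, sub_add_cancel,
    real_inner_smul_left, real_inner_smul_right, inner_sub_left, inner_sub_right, smul_eq_mul]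
  ring

end DifferenceQuotient

section FundamentalLemma

variable {E : Type*} [NormedAddCommGroup E] [InnerProductSpace ℝ E]

theorem integrable_inner_of_hasCompactSupport {X : Type*} [TopologicalSpace X] [MeasurableSpace X]
    [OpensMeasurableSpace X] {μ : Measure X} [IsFiniteMeasureOnCompacts μ] {A h : X → E}
    (hA : Continuous A) (hh : Continuous h) (hh_supp : HasCompactSupport h) :
    Integrable (fun x => ⟪A x, h x⟫) μ := by
  refine (hA.inner hh).integrable_of_hasCompactSupport (hh_supp.mono fun x hx h0 => hx ?_)
  simp only [h0, inner_zero_right]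

theorem eq_zero_of_forall_integral_inner_contDiff_eq_zero {V : Type*} [NormedAddCommGroup V]
    [NormedSpace ℝ V] [FiniteDimensional ℝ V] [MeasurableSpace V] [BorelSpace V] {μ : Measure V}
    [IsLocallyFiniteMeasure μ] [μ.IsOpenPosMeasure] {A : V → E} (hA : Continuous A)
    (hint : ∀ h : V → E, ContDiff ℝ ∞ h → HasCompactSupport h → ∫ x, ⟪A x, h x⟫ ∂μ = 0) :
    A = 0 := by
  funext x
  refine ext_inner_right ℝ fun w => ?_
  have hAw : Continuous fun x => ⟪A x, w⟫ := by fun_prop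
  have hae : (fun x => ⟪A x, w⟫) =ᵐ[μ] fun _ => 0 := by
    refine ae_eq_zero_of_integral_contDiff_smul_eq_zero hAw.locallyIntegrable fun g hg hg_supp => ?_
    simpa only [real_inner_smul_right, smul_eq_mul] using
      hint (fun x => g x • w) (hg.smul contDiff_const) hg_supp.smul_right
  simpa only [Pi.zero_apply, inner_zero_left] using
    congrFun ((hAw.ae_eq_iff_eq μ continuous_const).1 hae) x

end FundamentalLemma

section Variation

variable {E : Type*} [NormedAddCommGroup E] [InnerProductSpace ℝ E] {G F h : ℝ → E}

theorem inner_add_inner_slope_sub_eq (G F h : ℝ → E) (ε t : ℝ) :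
    ⟪G t, h t⟫ + ⟪F t, slope h (t - ε) t⟫ =
      ⟪G t - slope F t (t + ε), h t⟫ + slope (fun s => ⟪F (s + ε), h s⟫) (t - ε) t := by
  rw [← inner_slope_sub_add_inner_slope_add, inner_sub_left]
  ring

theorem integrable_inner_add_inner_slope_sub (hG : Continuous G) (hF : Continuous F)
    (hh : Continuous h) (hh_supp : HasCompactSupport h) (ε : ℝ) :
    Integrable fun t => ⟪G t, h t⟫ + ⟪F t, slope h (t - ε) t⟫ := by
  simp only [inner_add_inner_slope_sub_eq]
  exact (integrable_inner_of_hasCompactSupport (hG.sub (continuous_slope_add hF ε)) hh hh_supp).add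
    (integrable_slope_sub (integrable_inner_of_hasCompactSupport (by fun_prop) hh hh_supp) ε)

theorem integral_inner_add_inner_slope_sub (hG : Continuous G) (hF : Continuous F)
    (hh : Continuous h) (hh_supp : HasCompactSupport h) (ε : ℝ) :
    ∫ t, (⟪G t, h t⟫ + ⟪F t, slope h (t - ε) t⟫) = ∫ t, ⟪G t - slope F t (t + ε), h t⟫ := by
  have hP : Integrable fun s => ⟪F (s + ε), h s⟫ :=
    integrable_inner_of_hasCompactSupport (by fun_prop) hh hh_supp
  have hGF : Integrable fun t => ⟪G t - slope F t (t + ε), h t⟫ :=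
    integrable_inner_of_hasCompactSupport (hG.sub (continuous_slope_add hF ε)) hh hh_supp
  simp only [inner_add_inner_slope_sub_eq]
  rw [integral_add hGF (integrable_slope_sub hP ε), integral_slope_sub_eq_zero hP, add_zero]

theorem forall_integral_variation_eq_zero_iff (hG : Continuous G) (hF : Continuous F) (ε : ℝ) :
    (∀ h : ℝ → E, ContDiff ℝ ∞ h → HasCompactSupport h →
      ∫ t, (⟪G t, h t⟫ + ⟪F t, slope h (t - ε) t⟫) = 0) ↔
    ∀ t, G t = slope F t (t + ε) := by
  constructor
  · intro hvar t
    have hcont : Continuous fun t => G t - slope F t (t + ε) :=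
      hG.sub (continuous_slope_add hF ε)
    refine sub_eq_zero.1 (congrFun (eq_zero_of_forall_integral_inner_contDiff_eq_zero (μ := volume)
      hcont fun h hh hh_supp => ?_) t)
    rw [← integral_inner_add_inner_slope_sub hG hF hh.continuous hh_supp, hvar h hh hh_supp]
  · intro hEL h hh hh_supp
    simp only [integral_inner_add_inner_slope_sub hG hF hh.continuous hh_supp, ← hEL, sub_self,
      inner_zero_left, integral_zero]

theorem forall_integral_pair_variation_eq_zero_iff (hG : Continuous G) (hF : Continuous F)
    (α β : ℝ) :
    (∀ hp hm : ℝ → E, ContDiff ℝ ∞ hp → HasCompactSupport hp →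
      ContDiff ℝ ∞ hm → HasCompactSupport hm →
      ∫ t, (⟪G t, hp t + hm t⟫ + ⟪F t, slope hp (t - α) t + slope hm (t - β) t⟫) = 0) ↔
    ∀ t, G t = slope F t (t + α) ∧ G t = slope F t (t + β) := by
  rw [forall_and, ← forall_integral_variation_eq_zero_iff hG hF α,
    ← forall_integral_variation_eq_zero_iff hG hF β]
  constructor
  · intro hvar
    constructor
    · intro h hh hh_supp
      simpa [slope_def_module] using hvar h 0 hh hh_supp contDiff_const .zero
    · intro h hh hh_supp
      simpa [slope_def_module] using hvar 0 h contDiff_const .zero hh hh_supp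
  · rintro ⟨hvarp, hvarm⟩ hp hm hhp hp_supp hhm hm_supp
    calc
      _ = ∫ t, ((⟪G t, hp t⟫ + ⟪F t, slope hp (t - α) t⟫) +
          (⟪G t, hm t⟫ + ⟪F t, slope hm (t - β) t⟫)) := by
        simp only [inner_add_right, add_assoc, add_left_comm]
      _ = 0 := by
        rw [integral_add (integrable_inner_add_inner_slope_sub hG hF hhp.continuous hp_supp α)
          (integrable_inner_add_inner_slope_sub hG hF hhm.continuous hm_supp β),
          hvarp hp hhp hp_supp, hvarm hm hhm hm_supp, add_zero]

end Variation

theorem continuous_gradient_of_contDiff_uncurry {E Y : Type*} [NormedAddCommGroup E]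
    [InnerProductSpace ℝ E] [CompleteSpace E] [NormedAddCommGroup Y] [NormedSpace ℝ Y]
    {f : Y → E → ℝ} (hf : ContDiff ℝ 1 (Function.uncurry f)) :
    Continuous fun p : Y × E => ∇ (f p.1) p.2 := by
  have hf' : ContDiff ℝ 1 (Function.uncurry fun p : Y × E => f p.1) :=
    hf.comp (contDiff_fst.fst.prodMk contDiff_snd)
  exact (InnerProductSpace.toDual ℝ E).symm.continuous.comp
    (Continuous.fderiv_one hf' continuous_snd)

theorem backwardDiff_eq_slope {n : ℕ} (ε : ℝ) (f : ℝ → EuclideanSpace ℝ (Fin n)) (t : ℝ) :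
    backwardDiff ε f t = slope f (t - ε) t := by
  rw [backwardDiff, slope_def_module, sub_sub_cancel]

theorem forwardDiff_eq_slope {n : ℕ} (ε : ℝ) (f : ℝ → EuclideanSpace ℝ (Fin n)) (t : ℝ) :
    forwardDiff ε f t = slope f t (t + ε) := by
  rw [forwardDiff, slope_def_module, add_sub_cancel_left]

theorem asymmetric_extremal_iff_both_euler_lagrange_general {E : Type*} [NormedAddCommGroup E]
    [InnerProductSpace ℝ E] [CompleteSpace E] (ε : ℝ) (_hε : ε ≠ 0)
    (L : E × E × ℝ → ℝ) (hL : ContDiff ℝ 1 L)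
    (xp xm : ℝ → E) (hxp : Continuous xp) (hxm : Continuous xm)
    (y : ℝ → E) (hy : y = fun t => xp t + xm t)
    (v : ℝ → E) (hv : v = fun t => slope xp (t - ε) t + slope xm t (t + ε))
    (G : ℝ → E) (hG : G = fun t => ∇ (fun x => L (x, v t, t)) (y t))
    (F : ℝ → E) (hF : F = fun t => ∇ (fun w => L (y t, w, t)) (v t)) :
    (∀ hp hm : ℝ → E, ContDiff ℝ ∞ hp → HasCompactSupport hp →
      ContDiff ℝ ∞ hm → HasCompactSupport hm →
      ∫ t, (⟪G t, hp t + hm t⟫ + ⟪F t, slope hp (t - ε) t + slope hm t (t + ε)⟫) = 0) ↔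
    ∀ t, G t = slope F t (t + ε) ∧ G t = slope F (t - ε) t := by
  have slope_sub_neg (f : ℝ → E) (t : ℝ) : slope f (t - -ε) t = slope f t (t + ε) := by
    rw [slope_comm, sub_neg_eq_add]
  have slope_add_neg (f : ℝ → E) (t : ℝ) : slope f t (t + -ε) = slope f (t - ε) t := by
    rw [slope_comm, sub_eq_add_neg]
  have hyc : Continuous y := hy ▸ hxp.add hxm
  have hvc : Continuous v := by
    simp only [hv, ← slope_add_neg]
    exact (continuous_slope_add hxp (-ε)).add (continuous_slope_add hxm ε)
  have hGc : Continuous G := by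
    have hgrad := continuous_gradient_of_contDiff_uncurry (f := fun (q : E × ℝ) x => L (x, q))
      (hL.comp (contDiff_snd.prodMk contDiff_fst))
    exact hG ▸ hgrad.comp ((hvc.prodMk continuous_id).prodMk hyc)
  have hFc : Continuous F := by
    have hgrad := continuous_gradient_of_contDiff_uncurry
      (f := fun (q : E × ℝ) w => L (q.1, w, q.2))
      (hL.comp (contDiff_fst.fst.prodMk (contDiff_snd.prodMk contDiff_fst.snd)))
    exact hF ▸ hgrad.comp ((hyc.prodMk continuous_id).prodMk hvc)
  simpa only [slope_sub_neg, slope_add_neg] using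
    forall_integral_pair_variation_eq_zero_iff hGc hFc ε (-ε)

/-- general variational theorem. With `y = x₊ + x₋`,
`v = d⁺_ε x₊ + d⁻_ε x₋`, `G = ∂₁L(y,v,·)`, `F = ∂₂L(y,v,·)`, the pair `(x₊,x₋)`
is an extremal of the asymmetrically embedded action over all variation pairs
`(h₊,h₋) ∈ C_c^∞ × C_c^∞` if and only if both generalized Euler–Lagrange
equations `G = d⁻_ε F` and `G = d⁺_ε F` hold everywhere. -/
theorem asymmetric_extremal_iff_both_euler_lagrange
    (ε : ℝ) (hε : 0 < ε) (n : ℕ) (hn : 1 ≤ n)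
    (L : EuclideanSpace ℝ (Fin n) × EuclideanSpace ℝ (Fin n) × ℝ → ℝ)
    (hL : ContDiff ℝ 1 L)
    (xp xm : ℝ → EuclideanSpace ℝ (Fin n)) (hxp : Continuous xp) (hxm : Continuous xm)
    (y : ℝ → EuclideanSpace ℝ (Fin n)) (hy : y = fun t => xp t + xm t)
    (v : ℝ → EuclideanSpace ℝ (Fin n))
    (hv : v = fun t => backwardDiff ε xp t + forwardDiff ε xm t)
    (G : ℝ → EuclideanSpace ℝ (Fin n)) (hG : G = fun t => grad1 L (y t) (v t) t)
    (F : ℝ → EuclideanSpace ℝ (Fin n)) (hF : F = fun t => grad2 L (y t) (v t) t) :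
    (∀ hp hm : ℝ → EuclideanSpace ℝ (Fin n),
        ContDiff ℝ (⊤ : ℕ∞) hp → HasCompactSupport hp →
        ContDiff ℝ (⊤ : ℕ∞) hm → HasCompactSupport hm →
        (∫ t : ℝ, (⟪G t, hp t + hm t⟫
          + ⟪F t, backwardDiff ε hp t + forwardDiff ε hm t⟫)) = 0) ↔
    (∀ t : ℝ, G t = forwardDiff ε F t ∧ G t = backwardDiff ε F t) := by
  simp only [backwardDiff_eq_slope, forwardDiff_eq_slope] at hv ⊢
  exact asymmetric_extremal_iff_both_euler_lagrange_general ε hε.ne' L hL xp xm hxp hxm y hy v hv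
    G hG F hF

end
end

section
/- Fix ε > 0 and n ≥ 1. Let L : ℝ^n × ℝ^n × ℝ → ℝ be continuously differentiable and x : ℝ → ℝ^n continuous. Set G(t) = ∂₁L(x(t), d⁺_ε x(t), t) and F(t) = ∂₂L(x(t), d⁺_ε x(t), t). Then the following are equivalent: (i) for every h ∈ C_c^∞(ℝ, ℝ^n), ∫_ℝ [G(t)·h(t) + F(t)·d⁻_ε h(t)] dt = 0; (ii) for every t ∈ ℝ, G(t) = d⁺_ε F(t). (This is the causal Euler–Lagrange equation in the direction past → future, obtained from variations evolving in the opposite temporal direction.) -/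
open MeasureTheory
open scoped RealInnerProductSpace

noncomputable section

/-!
Translating by `ε` moves the forward difference off the variation `h`: the first variation is the
pairing of the continuous function `G - d⁺_ε F` with `h`. Testing against the variations `g • v`,
with `g` a scalar bump function and `v` a fixed vector, then forces `G - d⁺_ε F` to vanish.
-/

section PartialGradient

variable {𝕜 E P : Type*} [RCLike 𝕜] [NormedAddCommGroup E] [InnerProductSpace 𝕜 E]
  [CompleteSpace E] [NormedAddCommGroup P] [NormedSpace 𝕜 P]

theorem continuous_gradient_prodMk_left {f : E × P → 𝕜} (hf : ContDiff 𝕜 1 f) :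
    Continuous fun q : E × P => gradient (fun y => f (y, q.2)) q.1 := by
  have fderiv_partial (q : E × P) :
      fderiv 𝕜 (fun y => f (y, q.2)) q.1 = fderiv 𝕜 f q ∘L .inl 𝕜 E P :=
    ((hf.differentiable one_ne_zero q).hasFDerivAt.comp q.1
      (hasFDerivAt_prodMk_left q.1 q.2)).fderiv
  simp only [gradient, fderiv_partial]
  exact (InnerProductSpace.toDual 𝕜 E).symm.continuous.comp
    ((hf.continuous_fderiv one_ne_zero).clm_comp continuous_const)

end PartialGradient

section FundamentalLemma

variable {E : Type*} [NormedAddCommGroup E] [InnerProductSpace ℝ E]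

theorem integrable_inner_of_hasCompactSupport_right {X : Type*} [TopologicalSpace X]
    [MeasurableSpace X] [OpensMeasurableSpace X] {μ : Measure X} [IsFiniteMeasureOnCompacts μ]
    {f h : X → E} (hf : Continuous f) (hh : Continuous h) (hsupp : HasCompactSupport h) :
    Integrable (fun t => ⟪f t, h t⟫) μ := by
  refine (hf.inner hh).integrable_of_hasCompactSupport (hsupp.mono fun t ht h_zero => ht ?_)
  simp only [h_zero, inner_zero_right]

variable [CompleteSpace E] {V : Type*} [NormedAddCommGroup V] [NormedSpace ℝ V]
  [FiniteDimensional ℝ V] [MeasurableSpace V] [BorelSpace V] {μ : Measure V}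

theorem ae_eq_zero_of_forall_integral_inner_contDiff_eq_zero {f : V → E}
    (hf : LocallyIntegrable f μ)
    (hzero : ∀ h : V → E, ContDiff ℝ (⊤ : ℕ∞) h → HasCompactSupport h → ∫ t, ⟪f t, h t⟫ ∂μ = 0) :
    ∀ᵐ t ∂μ, f t = 0 := by
  refine ae_eq_zero_of_integral_contDiff_smul_eq_zero hf fun g hg hg_supp => ?_
  have hgf : Integrable (fun t => g t • f t) μ :=
    hf.integrable_smul_left_of_hasCompactSupport hg.continuous hg_supp
  refine ext_inner_left ℝ fun v => ?_
  calc ⟪v, ∫ t, g t • f t ∂μ⟫ = ∫ t, ⟪v, g t • f t⟫ ∂μ := (integral_inner hgf v).symm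
    _ = ∫ t, ⟪f t, g t • v⟫ ∂μ := by
      simp only [real_inner_smul_right, real_inner_comm]
    _ = 0 := hzero (fun t => g t • v) (hg.smul contDiff_const) hg_supp.smul_right
    _ = ⟪v, 0⟫ := (inner_zero_right v).symm

theorem forall_integral_inner_contDiff_eq_zero_iff [IsLocallyFiniteMeasure μ]
    [μ.IsOpenPosMeasure] {f : V → E} (hf : Continuous f) :
    (∀ h : V → E, ContDiff ℝ (⊤ : ℕ∞) h → HasCompactSupport h → ∫ t, ⟪f t, h t⟫ ∂μ = 0) ↔
      f = 0 := by
  constructor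
  · intro hzero
    exact (hf.ae_eq_iff_eq μ continuous_zero).1
      (ae_eq_zero_of_forall_integral_inner_contDiff_eq_zero hf.locallyIntegrable hzero)
  · rintro rfl h - -
    simp only [Pi.zero_apply, inner_zero_left, integral_zero]

end FundamentalLemma

section Translation

variable {A E : Type*} [AddGroup A] [MeasurableSpace A] [MeasurableAdd A] {μ : Measure A}
  [μ.IsAddRightInvariant] [NormedAddCommGroup E] [InnerProductSpace ℝ E] {f h : A → E} {a : A}

theorem integrable_inner_comp_add_right (hfh : Integrable (fun t => ⟪f (t - a), h t⟫) μ) :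
    Integrable (fun t => ⟪f t, h (t + a)⟫) μ := by
  simpa only [add_sub_cancel_right] using hfh.comp_add_right a

theorem integral_inner_comp_add_right :
    ∫ t, ⟪f t, h (t + a)⟫ ∂μ = ∫ t, ⟪f (t - a), h t⟫ ∂μ := by
  simpa only [add_sub_cancel_right] using
    integral_add_right_eq_self (μ := μ) (fun t => ⟪f (t - a), h t⟫) a

end Translation

section FiniteDifference

variable {n : ℕ} {ε : ℝ} {F G h : ℝ → EuclideanSpace ℝ (Fin n)}

theorem continuous_backwardDiff (hF : Continuous F) : Continuous (backwardDiff ε F) := by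
  unfold backwardDiff
  fun_prop

theorem integrable_inner_forwardDiff (hFh : Integrable fun t => ⟪F t, h t⟫)
    (hFh_shift : Integrable fun t => ⟪F (t - ε), h t⟫) :
    Integrable fun t => ⟪F t, forwardDiff ε h t⟫ := by
  have hFh_add := integrable_inner_comp_add_right hFh_shift
  simpa only [forwardDiff, real_inner_smul_right, inner_sub_right, Pi.sub_apply] using
    (hFh_add.sub hFh).const_mul ε⁻¹

theorem integral_inner_forwardDiff (hFh : Integrable fun t => ⟪F t, h t⟫)
    (hFh_shift : Integrable fun t => ⟪F (t - ε), h t⟫) :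
    ∫ t, ⟪F t, forwardDiff ε h t⟫ = -∫ t, ⟪backwardDiff ε F t, h t⟫ := by
  have hFh_add := integrable_inner_comp_add_right hFh_shift
  simp only [forwardDiff, backwardDiff, real_inner_smul_left, real_inner_smul_right,
    inner_sub_left, inner_sub_right, integral_const_mul]
  rw [integral_sub hFh_add hFh, integral_sub hFh hFh_shift,
    integral_inner_comp_add_right]
  ring

theorem integral_inner_add_inner_forwardDiff (hG : Continuous G) (hF : Continuous F)
    (hh : Continuous h) (hsupp : HasCompactSupport h) :
    ∫ t, (⟪G t, h t⟫ + ⟪F t, forwardDiff ε h t⟫) = ∫ t, ⟪G t - backwardDiff ε F t, h t⟫ := by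
  have integrable_inner {f : ℝ → EuclideanSpace ℝ (Fin n)} (hf : Continuous f) :
      Integrable fun t => ⟪f t, h t⟫ :=
    integrable_inner_of_hasCompactSupport_right hf hh hsupp
  have hGh := integrable_inner hG
  have hFh := integrable_inner hF
  have hFh_shift := integrable_inner (hF.comp (continuous_sub_right ε))
  calc ∫ t, (⟪G t, h t⟫ + ⟪F t, forwardDiff ε h t⟫)
      = (∫ t, ⟪G t, h t⟫) + ∫ t, ⟪F t, forwardDiff ε h t⟫ :=
        integral_add hGh (integrable_inner_forwardDiff hFh hFh_shift)
    _ = (∫ t, ⟪G t, h t⟫) - ∫ t, ⟪backwardDiff ε F t, h t⟫ := by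
        rw [integral_inner_forwardDiff hFh hFh_shift, sub_eq_add_neg]
    _ = ∫ t, (⟪G t, h t⟫ - ⟪backwardDiff ε F t, h t⟫) :=
        (integral_sub hGh (integrable_inner (continuous_backwardDiff hF))).symm
    _ = ∫ t, ⟪G t - backwardDiff ε F t, h t⟫ := by simp only [inner_sub_left]

theorem forall_integral_inner_add_inner_forwardDiff_eq_zero_iff (hG : Continuous G)
    (hF : Continuous F) :
    (∀ h : ℝ → EuclideanSpace ℝ (Fin n), ContDiff ℝ (⊤ : ℕ∞) h → HasCompactSupport h →
        ∫ t, (⟪G t, h t⟫ + ⟪F t, forwardDiff ε h t⟫) = 0) ↔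
      ∀ t, G t = backwardDiff ε F t := by
  calc (∀ h : ℝ → EuclideanSpace ℝ (Fin n), ContDiff ℝ (⊤ : ℕ∞) h → HasCompactSupport h →
        ∫ t, (⟪G t, h t⟫ + ⟪F t, forwardDiff ε h t⟫) = 0)
      ↔ ∀ h : ℝ → EuclideanSpace ℝ (Fin n), ContDiff ℝ (⊤ : ℕ∞) h → HasCompactSupport h →
        ∫ t, ⟪G t - backwardDiff ε F t, h t⟫ = 0 :=
        forall₃_congr fun h hh hsupp => by
          rw [integral_inner_add_inner_forwardDiff hG hF hh.continuous hsupp]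
    _ ↔ G - backwardDiff ε F = 0 :=
        forall_integral_inner_contDiff_eq_zero_iff (hG.sub (continuous_backwardDiff hF))
    _ ↔ ∀ t, G t = backwardDiff ε F t := sub_eq_zero.trans funext_iff

end FiniteDifference

section Lagrangian

variable {n : ℕ} {L : EuclideanSpace ℝ (Fin n) × EuclideanSpace ℝ (Fin n) × ℝ → ℝ}

theorem continuous_grad1 (hL : ContDiff ℝ 1 L) :
    Continuous fun q : EuclideanSpace ℝ (Fin n) × EuclideanSpace ℝ (Fin n) × ℝ =>
      grad1 L q.1 q.2.1 q.2.2 :=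
  continuous_gradient_prodMk_left hL

theorem continuous_grad2 (hL : ContDiff ℝ 1 L) :
    Continuous fun q : EuclideanSpace ℝ (Fin n) × EuclideanSpace ℝ (Fin n) × ℝ =>
      grad2 L q.1 q.2.1 q.2.2 := by
  have hL_swap : ContDiff ℝ 1
      fun p : EuclideanSpace ℝ (Fin n) × EuclideanSpace ℝ (Fin n) × ℝ =>
        L (p.2.1, p.1, p.2.2) := hL.comp (by fun_prop)
  have velocity_first : Continuous
      fun q : EuclideanSpace ℝ (Fin n) × EuclideanSpace ℝ (Fin n) × ℝ =>
        (q.2.1, q.1, q.2.2) := by fun_prop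
  exact (continuous_gradient_prodMk_left hL_swap).comp velocity_first

end Lagrangian

/-- causal Euler–Lagrange equation in the direction past → future.
With `G = ∂₁L(x, d⁺_ε x, ·)` and `F = ∂₂L(x, d⁺_ε x, ·)`, the trajectory is an
extremal with respect to variations evolving in the opposite temporal direction
(i.e. entering via `d⁻_ε h`) if and only if `G = d⁺_ε F` everywhere. -/
theorem causal_euler_lagrange_forward
    (ε : ℝ) (hε : 0 < ε) (n : ℕ) (hn : 1 ≤ n)
    (L : EuclideanSpace ℝ (Fin n) × EuclideanSpace ℝ (Fin n) × ℝ → ℝ)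
    (hL : ContDiff ℝ 1 L)
    (x : ℝ → EuclideanSpace ℝ (Fin n)) (hx : Continuous x)
    (G : ℝ → EuclideanSpace ℝ (Fin n))
    (hG : G = fun t => grad1 L (x t) (backwardDiff ε x t) t)
    (F : ℝ → EuclideanSpace ℝ (Fin n))
    (hF : F = fun t => grad2 L (x t) (backwardDiff ε x t) t) :
    (∀ h : ℝ → EuclideanSpace ℝ (Fin n),
        ContDiff ℝ (⊤ : ℕ∞) h → HasCompactSupport h →
        (∫ t : ℝ, (⟪G t, h t⟫ + ⟪F t, forwardDiff ε h t⟫)) = 0) ↔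
    (∀ t : ℝ, G t = backwardDiff ε F t) := by
  have hpath : Continuous fun t => (x t, backwardDiff ε x t, t) :=
    hx.prodMk ((continuous_backwardDiff hx).prodMk continuous_id)
  have hG_cont : Continuous G := hG ▸ (continuous_grad1 hL).comp hpath
  have hF_cont : Continuous F := hF ▸ (continuous_grad2 hL).comp hpath
  exact forall_integral_inner_add_inner_forwardDiff_eq_zero_iff hG_cont hF_cont

end
end
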